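/- (Strong duality.) Let y_0 be a nondominated point of (P(0)) and assume the Slater condition. Then there exists Δ_0 ∈ Γ_{y_0} ⊆ P(Z,Y) such that y_0 ∈ Φ(Δ_0), where Ψ(Δ) := ∪_{x∈Ω}(F(x)+Δ(G(x)+Z_+)) and Φ(Δ) := {y ∈ cl(Ψ(Δ)) : Ψ(Δ) ∩ (y−Y_+) ⊆ y+Y_+}; that is, y_0 is a nondominated point of the Lagrangian program (P[Δ_0]). -/

import Mathlib

open Pointwise Filter Topology

namespace Paper

section Defs

variable {E : Type*} [NormedAddCommGroup E] [NormedSpace ℝ E]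

/-- The cone hull of a set: all nonnegative multiples of its elements. -/
def coneHull (A : Set E) : Set E := {x | ∃ r : ℝ, 0 ≤ r ∧ ∃ a ∈ A, x = r • a}

/-- A cone: a nonempty set closed under multiplication by nonnegative scalars. -/
def IsCone (K : Set E) : Prop := K.Nonempty ∧ ∀ r : ℝ, 0 ≤ r → ∀ x ∈ K, r • x ∈ K

/-- A pointed cone: `K ∩ (-K) = {0}`. -/
def IsPointed (K : Set E) : Prop := K ∩ (-K) = {0}

/-- A proper cone: `{0} ≠ K ≠ E`. -/
def IsProper (K : Set E) : Prop := K ≠ {0} ∧ K ≠ Set.univ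

/-- A solid cone: nonempty interior. -/
def IsSolid (K : Set E) : Prop := (interior K).Nonempty

/-- The contingent cone to `A` at `w`. -/
def contingentCone (A : Set E) (w : E) : Set E :=
  {v | Filter.liminf (fun h : ℝ => Metric.infDist (w + h • v) A / h) (𝓝[>] (0:ℝ)) = 0}

end Defs

section SV

variable {X Y Z : Type*}
  [NormedAddCommGroup X] [NormedSpace ℝ X]
  [NormedAddCommGroup Y] [NormedSpace ℝ Y]
  [NormedAddCommGroup Z] [NormedSpace ℝ Z]

/-- The graph of a set-valued map. -/
def graph (Δ : Z → Set Y) : Set (Z × Y) := {p | p.2 ∈ Δ p.1}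

/-- The image of a set by a set-valued map. -/
def imageSet (Δ : Z → Set Y) (A : Set Z) : Set Y := ⋃ w ∈ A, Δ w

/-- The feasible set map `S(z) = {x ∈ Ω : G(x) ∩ (z - Z₊) ≠ ∅}`. -/
def Smap (Ω : Set X) (G : X → Set Z) (Zp : Set Z) (z : Z) : Set X :=
  {x | x ∈ Ω ∧ (G x ∩ ({z} - Zp)).Nonempty}

/-- The value map `V(z) = F(S(z))`. -/
def Vmap (Ω : Set X) (F : X → Set Y) (G : X → Set Z) (Zp : Set Z) (z : Z) : Set Y :=
  ⋃ x ∈ Smap Ω G Zp z, F x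

/-- The map `(V + Y₊)(z) = V(z) + Y₊`. -/
def VplusMap (Ω : Set X) (F : X → Set Y) (G : X → Set Z) (Zp : Set Z) (Yp : Set Y)
    (z : Z) : Set Y :=
  Vmap Ω F G Zp z + Yp

/-- The graph of `V + Y₊`. -/
def GraphVplus (Ω : Set X) (F : X → Set Y) (G : X → Set Z) (Zp : Set Z) (Yp : Set Y) :
    Set (Z × Y) :=
  {p : Z × Y | p.2 ∈ Vmap Ω F G Zp p.1 + Yp}

/-- Minimal points of a set `A` with respect to the cone `Yp`. -/
def MinSet (Yp : Set Y) (A : Set Y) : Set Y :=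
  {a ∈ A | A ∩ ({a} - Yp) ⊆ {a} + Yp}

/-- The marginal map `M(z) = Min(V(z))`. -/
def Mmap (Ω : Set X) (F : X → Set Y) (G : X → Set Z) (Zp : Set Z) (Yp : Set Y)
    (z : Z) : Set Y :=
  MinSet Yp (Vmap Ω F G Zp z)

/-- `y₀` is a nondominated point of `(P(0))`. -/
def Nondominated (Ω : Set X) (F : X → Set Y) (G : X → Set Z) (Zp : Set Z) (Yp : Set Y)
    (y0 : Y) : Prop :=
  y0 ∈ closure (Vmap Ω F G Zp 0) ∧
    Vmap Ω F G Zp 0 ∩ ({y0} - Yp) ⊆ {y0} + Yp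

/-- `y₀` is a minimal point of `(P(0))`. -/
def MinimalPoint (Ω : Set X) (F : X → Set Y) (G : X → Set Z) (Zp : Set Z) (Yp : Set Y)
    (y0 : Y) : Prop :=
  y0 ∈ Vmap Ω F G Zp 0 ∧
    Vmap Ω F G Zp 0 ∩ ({y0} - Yp) ⊆ {y0} + Yp

/-- The set `S_{Y₊}(y₀)` of separating pairs of continuous linear functionals. -/
def Sdual (Ω : Set X) (F : X → Set Y) (G : X → Set Z) (Zp : Set Z) (Yp : Set Y) (y0 : Y) :
    Set ((Z →L[ℝ] ℝ) × (Y →L[ℝ] ℝ)) :=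
  {p | (∀ z' ∈ -Zp, ∀ y' ∈ ({y0} : Set Y) - Yp, p.1 z' + p.2 y' ≤ p.2 y0) ∧
       (∀ q ∈ GraphVplus Ω F G Zp Yp, p.2 y0 ≤ p.1 q.1 + p.2 q.2)}

/-- `P(Z,Y)`: closed convex processes with full domain. -/
def PZY : Set (Z → Set Y) :=
  {Δ | IsClosed (graph Δ) ∧ Convex ℝ (graph Δ) ∧ IsCone (graph Δ) ∧ ∀ z, (Δ z).Nonempty}

/-- The set `Λ_{(z*,y*)}` of processes associated to `(z*,y*)`. -/
def Lambda (zs : Z →L[ℝ] ℝ) (ys : Y →L[ℝ] ℝ) : Set (Z → Set Y) :=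
  {Δ | Δ ∈ PZY ∧ graph Δ \ {0} ⊆ {p : Z × Y | 0 < -(zs p.1) + ys p.2}}

/-- The set `Γ_{y₀}` of processes associated to `y₀`. -/
def Gamma (Ω : Set X) (F : X → Set Y) (G : X → Set Z) (Zp : Set Z) (Yp : Set Y) (y0 : Y) :
    Set (Z → Set Y) :=
  ⋃ p ∈ Sdual Ω F G Zp Yp y0 \ {0}, Lambda p.1 p.2

/-- The Slater constraint qualification. -/
def Slater (Ω : Set X) (F : X → Set Y) (G : X → Set Z) (Zp : Set Z) : Prop :=
  ∃ x1 ∈ Ω, (F x1).Nonempty ∧ (G x1 ∩ (-interior Zp)).Nonempty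

/-- `Ψ(Δ) = ∪_{x∈Ω}(F(x) + Δ(G(x)+Z₊))`. -/
def Umap (Ω : Set X) (F : X → Set Y) (G : X → Set Z) (Zp : Set Z) (Δ : Z → Set Y) : Set Y :=
  ⋃ x ∈ Ω, (F x + imageSet Δ (G x + Zp))

/-- The dual map `Φ(Δ)`: nondominated points of the closure of `Ψ(Δ)`. -/
def Phi (Ω : Set X) (F : X → Set Y) (G : X → Set Z) (Zp : Set Z) (Yp : Set Y)
    (Δ : Z → Set Y) : Set Y :=
  {y ∈ closure (Umap Ω F G Zp Δ) | Umap Ω F G Zp Δ ∩ ({y} - Yp) ⊆ {y} + Yp}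

/-- `Δ` is a Lagrange multiplier of `(P(0))` at `y₀`. -/
def LagrangeMultiplier (Ω : Set X) (F : X → Set Y) (G : X → Set Z) (Zp : Set Z) (Yp : Set Y)
    (Δ : Z → Set Y) (y0 : Y) : Prop :=
  y0 ∈ closure (Umap Ω F G Zp Δ) ∧ Umap Ω F G Zp Δ ∩ ({y0} - Yp) ⊆ {y0} + Yp

/-- The graph of the Lagrange process of `(P(0))` at `y₀`. -/
def GraphLagrange (Ω : Set X) (F : X → Set Y) (G : X → Set Z) (Zp : Set Z) (Yp : Set Y)
    (y0 : Y) : Set (Z × Y) :=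
  {p : Z × Y | ∀ q ∈ Sdual Ω F G Zp Yp y0, q.1 p.1 ≤ q.2 p.2}

/-- The Lagrange process of `(P(0))` at `y₀`, as a set-valued map. -/
def Lagrange (Ω : Set X) (F : X → Set Y) (G : X → Set Z) (Zp : Set Z) (Yp : Set Y) (y0 : Y)
    (z : Z) : Set Y :=
  {y | (z, y) ∈ GraphLagrange Ω F G Zp Yp y0}

/-- The contingent derivative of a set-valued map `H` at `(z₀, y₀)`. -/
def contingentDeriv (H : Z → Set Y) (z0 : Z) (y0 : Y) (z : Z) : Set Y :=
  {y | (z, y) ∈ contingentCone (graph H) (z0, y0)}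

/-- The S-derivative (Shi derivative) of a set-valued map `H` at `(z₀, y₀)`. -/
def Sderiv (H : Z → Set Y) (z0 : Z) (y0 : Y) (z : Z) : Set Y :=
  {y | ∃ (h : ℕ → ℝ) (zn : ℕ → Z) (yn : ℕ → Y),
    (∀ n, 0 < h n) ∧ Filter.Tendsto zn Filter.atTop (𝓝 z) ∧
    Filter.Tendsto yn Filter.atTop (𝓝 y) ∧
    Filter.Tendsto (fun n => h n • zn n) Filter.atTop (𝓝 (0:Z)) ∧
    ∀ n, y0 + h n • yn n ∈ H (z0 + h n • zn n)}

/-- The standing assumptions of the paper: `Y₊`, `Z₊` proper solid convex cones, `Ω` nonempty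
convex, `F` is `Y₊`-convex and `G` is `Z₊`-convex. -/
def StandingHyp (Ω : Set X) (F : X → Set Y) (G : X → Set Z) (Zp : Set Z) (Yp : Set Y) : Prop :=
  IsCone Yp ∧ IsProper Yp ∧ IsSolid Yp ∧ Convex ℝ Yp ∧
  IsCone Zp ∧ IsProper Zp ∧ IsSolid Zp ∧ Convex ℝ Zp ∧
  Ω.Nonempty ∧ Convex ℝ Ω ∧
  Convex ℝ {p : X × Y | p.1 ∈ Ω ∧ p.2 ∈ F p.1 + Yp} ∧
  Convex ℝ {p : X × Z | p.1 ∈ Ω ∧ p.2 ∈ G p.1 + Zp}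

end SV

variable {X Y Z : Type*}
  [NormedAddCommGroup X] [NormedSpace ℝ X]
  [NormedAddCommGroup Y] [NormedSpace ℝ Y]
  [NormedAddCommGroup Z] [NormedSpace ℝ Z]

theorem cone_add {E : Type*} [NormedAddCommGroup E] [NormedSpace ℝ E] {K : Set E}
    (hK : IsCone K) (hc : Convex ℝ K) {a b : E} (ha : a ∈ K) (hb : b ∈ K) : a + b ∈ K := by
  have h := hc ha hb (a := 1/2) (b := 1/2) (by norm_num) (by norm_num) (by norm_num)
  have h2 := hK.2 2 (by norm_num) _ h
  rw [smul_add, smul_smul, smul_smul] at h2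
  norm_num at h2
  exact h2

theorem cone_zero {E : Type*} [NormedAddCommGroup E] [NormedSpace ℝ E] {K : Set E}
    (hK : IsCone K) : (0 : E) ∈ K := by
  obtain ⟨x, hx⟩ := hK.1
  simpa using hK.2 0 le_rfl x hx

theorem cone_add_int {E : Type*} [NormedAddCommGroup E] [NormedSpace ℝ E] {K : Set E}
    (hK : IsCone K) (hc : Convex ℝ K) {k i : E} (hk : k ∈ K) (hi : i ∈ interior K)
    {t : ℝ} (ht : 0 < t) : k + t • i ∈ interior K := by
  have hU : IsOpen {x : E | t⁻¹ • (x - k) ∈ interior K} :=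
    isOpen_interior.preimage (f := fun x : E => t⁻¹ • (x - k)) (by fun_prop)
  refine interior_maximal (s := K) ?_ hU ?_
  · intro x hx
    have h1 := hK.2 t ht.le _ (interior_subset hx)
    rw [smul_smul, mul_inv_cancel₀ ht.ne', one_smul] at h1
    have := cone_add hK hc hk h1
    simpa using this
  · show t⁻¹ • (k + t • i - k) ∈ interior K
    rw [add_sub_cancel_left, smul_smul, inv_mul_cancel₀ ht.ne', one_smul]
    exact hi

theorem cone_int_zero {E : Type*} [NormedAddCommGroup E] [NormedSpace ℝ E] {K : Set E}
    (hK : IsCone K) (h0 : (0 : E) ∈ interior K) : K = Set.univ := by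
  ext x
  simp only [Set.mem_univ, iff_true]
  have hcont : Tendsto (fun t : ℝ => t • x) (𝓝[>] 0) (𝓝 (0 : E)) := by
    have : ContinuousAt (fun t : ℝ => t • x) 0 := by fun_prop
    have h := this.tendsto
    rw [zero_smul] at h
    exact h.mono_left nhdsWithin_le_nhds
  have he := hcont.eventually (mem_interior_iff_mem_nhds.1 h0)
  obtain ⟨t, h1, h2⟩ := (he.and self_mem_nhdsWithin).exists
  have ht : 0 < t := h2
  have h3 := hK.2 t⁻¹ (inv_nonneg.2 ht.le) _ h1
  rwa [smul_smul, inv_mul_cancel₀ ht.ne', one_smul] at h3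

theorem mem_A {Ω : Set X} {F : X → Set Y} {G : X → Set Z} {Zp : Set Z} {Yp : Set Y}
    {p : Z × Y} : p ∈ GraphVplus Ω F G Zp Yp ↔
      ∃ x ∈ Ω, p.1 ∈ G x + Zp ∧ p.2 ∈ F x + Yp := by
  constructor
  · rintro ⟨v, hv, k, hk, hvk⟩
    simp only [Vmap, Set.mem_iUnion] at hv
    obtain ⟨x, ⟨hx, g, hg, z, hz, c, hc, hzc⟩, hf⟩ := hv
    rw [Set.mem_singleton_iff] at hz
    refine ⟨x, hx, ⟨g, hg, c, hc, ?_⟩, ⟨v, hf, k, hk, hvk⟩⟩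
    simp only at hzc ⊢
    rw [← hzc, hz]; abel
  · rintro ⟨x, hx, ⟨g, hg, c, hc, hgc⟩, ⟨v, hf, k, hk, hvk⟩⟩
    refine ⟨v, ?_, k, hk, hvk⟩
    simp only [Vmap, Set.mem_iUnion]
    refine ⟨x, ⟨hx, g, hg, p.1, rfl, c, hc, ?_⟩, hf⟩
    simp only at hgc ⊢
    rw [← hgc]; abel

theorem mem_V {Ω : Set X} {F : X → Set Y} {G : X → Set Z} {Zp : Set Z}
    {z : Z} {y : Y} : y ∈ Vmap Ω F G Zp z ↔ ∃ x ∈ Ω, z ∈ G x + Zp ∧ y ∈ F x := by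
  have h := mem_A (Ω := Ω) (F := F) (G := G) (Zp := Zp) (Yp := {(0 : Y)}) (p := (z, y))
  simpa [GraphVplus] using h

theorem convex_A {Ω : Set X} {F : X → Set Y} {G : X → Set Z} {Zp : Set Z} {Yp : Set Y}
    (hF : Convex ℝ {p : X × Y | p.1 ∈ Ω ∧ p.2 ∈ F p.1 + Yp})
    (hG : Convex ℝ {p : X × Z | p.1 ∈ Ω ∧ p.2 ∈ G p.1 + Zp}) :
    Convex ℝ (GraphVplus Ω F G Zp Yp) := by
  intro p hp q hq a b ha hb hab
  obtain ⟨x, hx, h1, h2⟩ := mem_A.1 hp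
  obtain ⟨x', hx', h1', h2'⟩ := mem_A.1 hq
  have e1 := hF (x := (x, p.2)) ⟨hx, h2⟩ (y := (x', q.2)) ⟨hx', h2'⟩ ha hb hab
  have e2 := hG (x := (x, p.1)) ⟨hx, h1⟩ (y := (x', q.1)) ⟨hx', h1'⟩ ha hb hab
  exact mem_A.2 ⟨a • x + b • x', e1.1, e2.2, e1.2⟩

/-- The process used in the proof. -/
def proc (zs : Z →L[ℝ] ℝ) (ys : Y →L[ℝ] ℝ) (y1 : Y) (z : Z) : Set Y :=
  {y | y = ys y • y1 ∧ zs z + ‖z‖ ≤ ys y}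

theorem proc_mem (zs : Z →L[ℝ] ℝ) (ys : Y →L[ℝ] ℝ) (y1 : Y) (h1 : ys y1 = 1) :
    proc zs ys y1 ∈ Lambda zs ys := by
  refine ⟨⟨?_, ?_, ⟨⟨0, ?_⟩, ?_⟩, ?_⟩, ?_⟩
  · exact (isClosed_eq (f := fun p : Z × Y => p.2) (g := fun p : Z × Y => ys p.2 • y1)
      (by fun_prop) (by fun_prop)).inter
      (isClosed_le (f := fun p : Z × Y => zs p.1 + ‖p.1‖) (g := fun p : Z × Y => ys p.2)
      (by fun_prop) (by fun_prop))
  · rintro ⟨z, y⟩ ⟨e, l⟩ ⟨z', y'⟩ ⟨e', l'⟩ a b ha hb hab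
    simp only at e l e' l'
    refine ⟨?_, ?_⟩
    · show a • y + b • y' = ys (a • y + b • y') • y1
      rw [map_add, map_smul, map_smul, add_smul, smul_assoc, smul_assoc, ← e, ← e']
    · show zs (a • z + b • z') + ‖a • z + b • z'‖ ≤ ys (a • y + b • y')
      have := norm_add_le (a • z) (b • z')
      rw [norm_smul, norm_smul, Real.norm_of_nonneg ha, Real.norm_of_nonneg hb] at this
      simp only [map_add, map_smul, smul_eq_mul]
      nlinarith
  · simp [graph, proc]
  · rintro r hr ⟨z, y⟩ ⟨e, l⟩
    simp only at e l
    refine ⟨?_, ?_⟩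
    · show r • y = ys (r • y) • y1
      rw [map_smul, smul_assoc, ← e]
    · show zs (r • z) + ‖r • z‖ ≤ ys (r • y)
      rw [norm_smul, Real.norm_of_nonneg hr]
      simp only [map_smul, smul_eq_mul]
      nlinarith
  · intro z
    exact ⟨(zs z + ‖z‖) • y1, by simp [proc, h1]⟩
  · rintro ⟨z, y⟩ ⟨⟨e, l⟩, hne⟩
    simp only at e l
    show 0 < -(zs z) + ys y
    by_cases hz : z = 0
    · subst hz
      simp only [map_zero, norm_zero, add_zero, neg_zero, zero_add] at l ⊢
      refine lt_of_le_of_ne l fun h => hne ?_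
      rw [← h, zero_smul] at e
      simp [e]
    · have := norm_pos_iff.2 hz
      linarith

theorem stmt_12 (Ω : Set X) (F : X → Set Y) (G : X → Set Z) (Zp : Set Z) (Yp : Set Y)
    (hSt : StandingHyp Ω F G Zp Yp)
    (y0 : Y) (hy0 : Nondominated Ω F G Zp Yp y0)
    (hSl : Slater Ω F G Zp) :
    ∃ Δ0 ∈ Gamma Ω F G Zp Yp y0, y0 ∈ Phi Ω F G Zp Yp Δ0 := by
  obtain ⟨cY, pY, ⟨yi, hyi⟩, vY, cZ, pZ, ⟨zi, hzi⟩, vZ, -, -, hF, hG⟩ := hSt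
  obtain ⟨hcl, hnd⟩ := hy0
  obtain ⟨x1, hx1, ⟨f1, hf1⟩, g1, hg1, hg1'⟩ := hSl
  have hA := convex_A hF hG
  have hso : IsOpen {p : Z × Y | -p.1 ∈ interior Zp ∧ y0 - p.2 ∈ interior Yp} :=
    (isOpen_interior.preimage (f := fun p : Z × Y => -p.1) (by fun_prop)).inter
      (isOpen_interior.preimage (f := fun p : Z × Y => y0 - p.2) (by fun_prop))
  have hsc : Convex ℝ {p : Z × Y | -p.1 ∈ interior Zp ∧ y0 - p.2 ∈ interior Yp} := by
    rintro ⟨z, y⟩ ⟨h1, h2⟩ ⟨z', y'⟩ ⟨h1', h2'⟩ a b ha hb hab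
    have e1 := vZ.interior h1 h1' ha hb hab
    have e2 := vY.interior h2 h2' ha hb hab
    refine ⟨?_, ?_⟩
    · convert e1 using 1
      show -(a • z + b • z') = a • -z + b • -z'
      module
    · convert e2 using 1
      show y0 - (a • y + b • y') = a • (y0 - y) + b • (y0 - y')
      obtain rfl : b = 1 - a := by linarith
      module
  have hdis : Disjoint {p : Z × Y | -p.1 ∈ interior Zp ∧ y0 - p.2 ∈ interior Yp}
      (GraphVplus Ω F G Zp Yp) := by
    rw [Set.disjoint_left]
    rintro ⟨z, y⟩ ⟨h1, h2⟩ hp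
    obtain ⟨x, hx, ⟨g, hg, c, hc, hgc⟩, ⟨v, hv, k, hk, hvk⟩⟩ := mem_A.1 hp
    simp only at h1 h2 hgc hvk
    have hvi : y0 - v ∈ interior Yp := by
      have := cone_add_int cY vY hk h2 one_pos
      rw [one_smul, ← hvk] at this
      convert this using 1
      abel
    have hvV : v ∈ Vmap Ω F G Zp 0 := by
      refine mem_V.2 ⟨x, hx, ⟨g, hg, c + -z, cone_add cZ vZ hc (interior_subset h1), ?_⟩, hv⟩
      simp only
      rw [← hgc]; abel
    obtain ⟨a, ha, k', hk', hak⟩ := hnd ⟨hvV, y0, rfl, y0 - v, interior_subset hvi, by simp⟩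
    rw [Set.mem_singleton_iff] at ha
    simp only at hak
    subst ha
    have := cone_add_int cY vY hk' hvi one_pos
    rw [one_smul, ← hak] at this
    refine pY.2 (cone_int_zero cY ?_)
    convert this using 1
    abel
  obtain ⟨f, u, hfs, hft⟩ := geometric_hahn_banach_open hsc hso hA hdis
  obtain ⟨zs, hzs⟩ : ∃ zs : Z →L[ℝ] ℝ, ∀ z, zs z = f (z, 0) :=
    ⟨f.comp (ContinuousLinearMap.inl ℝ Z Y), fun z => by simp⟩
  obtain ⟨ys, hys⟩ : ∃ ys : Y →L[ℝ] ℝ, ∀ y, ys y = f (0, y) :=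
    ⟨f.comp (ContinuousLinearMap.inr ℝ Z Y), fun z => by simp⟩
  have hf : ∀ z y, f (z, y) = zs z + ys y := by
    intro z y
    rw [hzs, hys, ← map_add]; simp
  have hu1 : u ≤ ys y0 := by
    have hc : IsClosed {y : Y | u ≤ ys y} := isClosed_le (by fun_prop) (by fun_prop)
    refine (closure_minimal ?_ hc) hcl
    intro v hv
    have h : ((0 : Z), v) ∈ GraphVplus Ω F G Zp Yp :=
      ⟨v, hv, 0, cone_zero cY, by simp⟩
    have := hft _ h
    rw [hf, map_zero, zero_add] at this
    exact this
  have hint : ∀ z ∈ interior Zp, ∀ y ∈ interior Yp, ys y0 - zs z - ys y < u := by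
    intro z hz y hy
    have := hfs (-z, y0 - y) ⟨by simpa using hz, by simpa using hy⟩
    rw [hf, map_neg, map_sub] at this
    linarith
  have hcone : ∀ z ∈ Zp, ∀ y ∈ Yp, ys y0 - zs z - ys y ≤ u := by
    intro z hz y hy
    have hpos : 0 < zs zi + ys yi := by linarith [hint zi hzi yi hyi]
    refine le_of_forall_pos_le_add fun ε hε => ?_
    have ht : 0 < ε / (zs zi + ys yi) := by positivity
    have := hint _ (cone_add_int cZ vZ hz hzi ht) _ (cone_add_int cY vY hy hyi ht)
    simp only [map_add, map_smul, smul_eq_mul] at this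
    have e : ε / (zs zi + ys yi) * (zs zi + ys yi) = ε := by field_simp
    nlinarith
  have hu : u = ys y0 := by
    refine le_antisymm hu1 ?_
    simpa using hcone 0 (cone_zero cZ) 0 (cone_zero cY)
  have hys0 : ys ≠ 0 := by
    intro h0
    have h1 := hint (-g1) (by simpa using hg1') yi hyi
    have h2 : (g1, f1) ∈ GraphVplus Ω F G Zp Yp :=
      mem_A.2 ⟨x1, hx1, ⟨g1, hg1, 0, cone_zero cZ, by simp⟩, ⟨f1, hf1, 0, cone_zero cY, by simp⟩⟩
    have h3 := hft _ h2
    rw [hf] at h3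
    simp [h0] at h1 h3 hu
    linarith
  obtain ⟨y1, hy1⟩ : ∃ y1, ys y1 = 1 := by
    obtain ⟨w, hw⟩ : ∃ w, ys w ≠ 0 := by
      by_contra! h
      exact hys0 (ContinuousLinearMap.ext h)
    exact ⟨(ys w)⁻¹ • w, by simp [hw]⟩
  have hL := proc_mem zs ys y1 hy1
  refine ⟨proc zs ys y1, ?_, ?_, ?_⟩
  · simp only [Gamma, Set.mem_iUnion]
    refine ⟨(zs, ys), ⟨⟨?_, ?_⟩, ?_⟩, hL⟩
    · rintro z hz y ⟨a, ha, k, hk, hak⟩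
      rw [Set.mem_singleton_iff] at ha
      simp only at hak
      subst ha
      have := hcone (-z) hz k hk
      rw [map_neg] at this
      rw [← hak, map_sub]
      simp only
      linarith
    · rintro ⟨z, y⟩ hq
      have := hft _ hq
      rw [hf, hu] at this
      exact this
    · intro h
      exact hys0 (congrArg Prod.snd h)
  · refine closure_mono ?_ hcl
    intro v hv
    obtain ⟨x, hx, hg, hv⟩ := mem_V.1 hv
    simp only [Umap, imageSet, Set.mem_iUnion]
    refine ⟨x, hx, v, hv, 0, ?_, by simp⟩
    simp only [Set.mem_iUnion]
    exact ⟨0, hg, by simp [proc]⟩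
  · rintro w ⟨hw, a, ha, k, hk, hak⟩
    rw [Set.mem_singleton_iff] at ha
    simp only at hak
    subst ha
    simp only [Umap, imageSet, Set.mem_iUnion] at hw
    obtain ⟨x, hx, v, hv, d, hd, hvd⟩ := hw
    simp only [Set.mem_iUnion] at hd
    obtain ⟨z, hz, hd⟩ := hd
    simp only at hvd
    have hk0 := hcone 0 (cone_zero cZ) k hk
    have h2 : (z, v) ∈ GraphVplus Ω F G Zp Yp :=
      mem_A.2 ⟨x, hx, hz, ⟨v, hv, 0, cone_zero cY, by simp⟩⟩
    have h3 := hft _ h2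
    rw [hf] at h3
    have e1 : ys w = ys a - ys k := by rw [← hak, map_sub]
    have e2 : ys w = ys v + ys d := by rw [← hvd, map_add]
    rw [map_zero] at hk0
    have h0 : (z, d) = (0 : Z × Y) := by
      by_contra hne
      have h4 : 0 < -(zs z) + ys d := hL.2 ⟨hd, hne⟩
      linarith
    obtain ⟨rfl, rfl⟩ := Prod.mk.inj h0
    refine hnd ⟨?_, a, rfl, k, hk, hak⟩
    rw [← hvd, add_zero]
    exact mem_V.2 ⟨x, hx, hz, hv⟩

end Paper
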